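/- arXiv:1802.08312 — 3 statements merged into one kernel-verified Lean document; each statement's English description precedes it below -/
import Mathlib

section
/- Data processing inequality for f-mutual information (deterministic version): Let Σ_X, Σ_{X'}, Σ_Y be finite nonempty types, let J be a joint probability distribution on Σ_X × Σ_Y with J(x,y) > 0 for all (x,y), let g : Σ_X → Σ_{X'} be a surjective function, and let f : ℝ → ℝ be convex with f(1) = 0. Define the joint distribution J' on Σ_{X'} × Σ_Y by J'(x',y) := Σ_{x : g(x)=x'} J(x,y). Then MI^f(J') ≤ MI^f(J). -/
/-!
Write `p`, `q` for the marginals of `J`. Pushing `J` forward along `g` leaves the marginal `q`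
unchanged and sums both `J x y` and `p x * q y` over the fibres of `g`. For fixed `x'` and `y`, the
summand of `MIf` for the pushforward is thus the perspective `w * f (a / w)` of `f` evaluated at
the fibre sums of `w = J x y` and `a = p x * q y`, and Jensen's inequality
(`sum_mul_map_div_le`) bounds it by the sum of the perspectives over the fibre. Surjectivity
of `g` makes every fibre nonempty. Summing over `x'` and `y` recovers `MIf f J`.
-/

open Finset

/-- The f-mutual information of a joint distribution `J` on `A × B`:
`MI^f(J) = ∑ x y, J x y * f (p x * q y / J x y)` where `p`, `q` are the marginals. -/
noncomputable def MIf {A B : Type*} [Fintype A] [Fintype B] (f : ℝ → ℝ) (J : A → B → ℝ) : ℝ :=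
  ∑ x, ∑ y, J x y * f ((∑ y', J x y') * (∑ x', J x' y) / J x y)

/-- The `f`-version of the log-sum inequality: Jensen's inequality for `f` at the points `a i / w i`
with weights `w i`, homogenised so that the weights need not sum to `1`. -/
theorem sum_mul_map_div_le {ι : Type*} {s : Finset ι} (hs : s.Nonempty) {w a : ι → ℝ} {f : ℝ → ℝ}
    (hf : ConvexOn ℝ Set.univ f) (hw : ∀ i ∈ s, 0 < w i) :
    (∑ i ∈ s, w i) * f ((∑ i ∈ s, a i) / ∑ i ∈ s, w i) ≤ ∑ i ∈ s, w i * f (a i / w i) := by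
  have hW : 0 < ∑ i ∈ s, w i := Finset.sum_pos hw hs
  have key := hf.map_centerMass_le (t := s) (w := w) (p := fun i => a i / w i)
    (fun i hi => (hw i hi).le) hW (fun _ _ => Set.mem_univ _)
  have ha : ∑ i ∈ s, w i * (a i / w i) = ∑ i ∈ s, a i :=
    Finset.sum_congr rfl fun i hi => mul_div_cancel₀ _ (hw i hi).ne'
  simp only [Finset.centerMass, smul_eq_mul, Function.comp_apply, ha, inv_mul_eq_div] at key
  rwa [le_div_iff₀' hW] at key

/-- Data processing inequality for f-mutual information (deterministic version):
for any surjective `g`, `MI^f(g(X);Y) ≤ MI^f(X;Y)`. -/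
theorem MIf_data_processing_map {A A' B : Type*}
    [Fintype A] [Nonempty A] [Fintype A'] [Nonempty A'] [DecidableEq A']
    [Fintype B] [Nonempty B]
    (J : A → B → ℝ) (g : A → A') (f : ℝ → ℝ)
    (hpos : ∀ x y, 0 < J x y) (hsum : ∑ x, ∑ y, J x y = 1)
    (hg : Function.Surjective g)
    (hf : ConvexOn ℝ Set.univ f) (hf1 : f 1 = 0) :
    MIf f (fun x' y => ∑ x ∈ Finset.univ.filter (fun x => g x = x'), J x y) ≤ MIf f J := by
  have hq : ∀ y, ∑ x', ∑ x ∈ univ.filter (fun x => g x = x'), J x y = ∑ x, J x y := fun y =>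
    Finset.sum_fiberwise univ g fun x => J x y
  have hp : ∀ x', ∑ y, ∑ x ∈ univ.filter (fun x => g x = x'), J x y =
      ∑ x ∈ univ.filter (fun x => g x = x'), ∑ y, J x y := fun _ => Finset.sum_comm
  unfold MIf
  simp only [hq, hp, Finset.sum_mul]
  rw [← Finset.sum_fiberwise univ g]
  refine Finset.sum_le_sum fun x' _ => ?_
  rw [Finset.sum_comm (s := univ.filter fun x => g x = x')]
  refine Finset.sum_le_sum fun y _ => ?_
  obtain ⟨x₀, hx₀⟩ := hg x'
  have hne : (univ.filter fun x => g x = x').Nonempty := ⟨x₀, by simp [hx₀]⟩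
  have h := sum_mul_map_div_le hne (w := fun x => J x y)
    (a := fun x => (∑ y', J x y') * ∑ z, J z y) hf (fun x _ => hpos x y)
  simpa only [Finset.sum_mul] using h
end

section
/- Monotonicity of f-mutual information under adding a component: Let Σ_X, Σ_W, Σ_Y be finite nonempty types, let J be a joint probability distribution on (Σ_X × Σ_W) × Σ_Y with J((x,w),y) > 0 for all (x,w,y), and let f : ℝ → ℝ be convex with f(1) = 0. Let J_X be the joint distribution on Σ_X × Σ_Y defined by J_X(x,y) := Σ_w J((x,w),y). Then MI^f(J_X) ≤ MI^f(J); that is, MI^f(X;Y) ≤ MI^f((X,W);Y). -/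
/-!
For fixed `x` and `y`, the term of `MI^f(X;Y)` at `(x, y)` is bounded by the sum over `w` of the
terms of `MI^f((X,W);Y)` at `((x, w), y)`. With `b w = J (x, w) y` and
`a w = p (x, w) * q y`, both `b` and `a` sum over `w` to the corresponding quantities for the
pair `(X, Y)`, so the bound is the generalized log-sum inequality `sum_mul_map_div_le`, which is
Jensen's inequality with weights `b w / ∑ b`. Summing over `x` and `y` gives the claim.
-/

open Finset

/-- Generalized log-sum inequality: the perspective `(a, b) ↦ b * f (a / b)` of a convex
function is subadditive on `b > 0`. -/
lemma sum_mul_map_div_le_s6 {W : Type*} [Fintype W] [Nonempty W] {f : ℝ → ℝ}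
    (hf : ConvexOn ℝ Set.univ f) (a b : W → ℝ) (hb : ∀ w, 0 < b w) :
    (∑ w, b w) * f ((∑ w, a w) / ∑ w, b w) ≤ ∑ w, b w * f (a w / b w) := by
  have hS : 0 < ∑ w, b w := Finset.sum_pos (fun w _ => hb w) Finset.univ_nonempty
  have h := hf.map_sum_le (t := Finset.univ) (w := fun w => b w / ∑ v, b v)
    (p := fun w => a w / b w) (fun w _ => (div_pos (hb w) hS).le)
    (by rw [← Finset.sum_div, div_self hS.ne']) (fun _ _ => Set.mem_univ _)
  have hmean : ∑ w, (b w / ∑ v, b v) • (a w / b w) = (∑ w, a w) / ∑ w, b w := by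
    rw [Finset.sum_div]
    refine Finset.sum_congr rfl fun w _ => ?_
    have := (hb w).ne'
    rw [smul_eq_mul]
    field_simp
  rw [hmean] at h
  calc (∑ w, b w) * f ((∑ w, a w) / ∑ w, b w)
      ≤ (∑ w, b w) * ∑ w, (b w / ∑ v, b v) • f (a w / b w) :=
        mul_le_mul_of_nonneg_left h hS.le
    _ = ∑ w, b w * f (a w / b w) := by
        rw [Finset.mul_sum]
        refine Finset.sum_congr rfl fun w _ => ?_
        rw [smul_eq_mul, ← mul_assoc, mul_div_cancel₀ _ hS.ne']

/-- Monotonicity of f-mutual information under adding a component: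
`MI^f(X;Y) ≤ MI^f((X,W);Y)`. -/
theorem MIf_mono_fst {A W B : Type*}
    [Fintype A] [Nonempty A] [Fintype W] [Nonempty W] [Fintype B] [Nonempty B]
    (J : A × W → B → ℝ) (f : ℝ → ℝ)
    (hpos : ∀ xw y, 0 < J xw y) (hsum : ∑ xw, ∑ y, J xw y = 1)
    (hf : ConvexOn ℝ Set.univ f) (hf1 : f 1 = 0) :
    MIf f (fun x y => ∑ w, J (x, w) y) ≤ MIf f J := by
  unfold MIf
  rw [Fintype.sum_prod_type]
  refine Finset.sum_le_sum fun x _ => ?_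
  rw [Finset.sum_comm (s := (Finset.univ : Finset W))]
  refine Finset.sum_le_sum fun y _ => ?_
  have h := sum_mul_map_div_le_s6 hf
    (fun w => (∑ y', J (x, w) y') * ∑ x', J x' y) (fun w => J (x, w) y)
    (fun w => hpos (x, w) y)
  rw [← Finset.sum_mul, Finset.sum_comm, Fintype.sum_prod_type] at h
  rw [Fintype.sum_prod_type]
  exact h
end

section
/- Convexity of f-mutual information: Let Σ_X, Σ_Y be finite nonempty types, let f : ℝ → ℝ be convex with f(1) = 0, let λ ∈ [0,1], and let J₁, J₂ be joint probability distributions on Σ_X × Σ_Y, strictly positive everywhere, with the same Σ_Y-marginal (i.e., Σ_x J₁(x,y) = Σ_x J₂(x,y) for all y). Then MI^f(λ·J₁ + (1−λ)·J₂) ≤ λ·MI^f(J₁) + (1−λ)·MI^f(J₂). (This is the joint distribution of (X,Y) where X equals X₁ or X₂ according to an independent Bernoulli(λ) coin.) -/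
/-!
The perspective `(u, t) ↦ t * f (u / t)` of a convex function `f` is jointly convex on `t > 0`
(`perspective_convex`). Each summand of `MIf f J` is this perspective evaluated at
`(p x * q y, J x y)`. The marginal `p` is linear in `J`, and `q` is the same for `J₁`, `J₂` and
their mixture, so `p x * q y` is affine along the segment from `J₂` to `J₁`. Hence every summand is
convex along that segment, and so is the sum.
-/

open Finset

/-- Joint convexity of the perspective `(u, t) ↦ t * f (u / t)` on the half-plane `t > 0`. -/
lemma perspective_convex {f : ℝ → ℝ} (hf : ConvexOn ℝ Set.univ f) {a b s t : ℝ} (u v : ℝ)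
    (ha : 0 ≤ a) (hb : 0 ≤ b) (hab : a + b = 1) (hs : 0 < s) (ht : 0 < t) :
    (a * s + b * t) * f ((a * u + b * v) / (a * s + b * t))
      ≤ a * (s * f (u / s)) + b * (t * f (v / t)) := by
  have hw : 0 < a * s + b * t := by
    rcases ha.eq_or_lt with rfl | ha'
    · have : b = 1 := by linarith
      simpa [this] using ht
    · positivity
  -- Jensen at the points `u / s`, `v / t` with weights proportional to `a * s`, `b * t`.
  have key := hf.2 (Set.mem_univ (u / s)) (Set.mem_univ (v / t))
    (show 0 ≤ a * s / (a * s + b * t) by positivity)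
    (show 0 ≤ b * t / (a * s + b * t) by positivity) (by rw [← add_div, div_self hw.ne'])
  simp only [smul_eq_mul] at key
  have hpt : a * s / (a * s + b * t) * (u / s) + b * t / (a * s + b * t) * (v / t)
      = (a * u + b * v) / (a * s + b * t) := by
    field_simp
  rw [hpt] at key
  calc (a * s + b * t) * f ((a * u + b * v) / (a * s + b * t))
      ≤ (a * s + b * t) * (a * s / (a * s + b * t) * f (u / s)
          + b * t / (a * s + b * t) * f (v / t)) := mul_le_mul_of_nonneg_left key hw.le
    _ = a * (s * f (u / s)) + b * (t * f (v / t)) := by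
      field_simp

/-- Convexity of f-mutual information in the joint distribution, for two joint
distributions with the same `Y`-marginal. -/
theorem MIf_convex {A B : Type*} [Fintype A] [Nonempty A] [Fintype B] [Nonempty B]
    (J₁ J₂ : A → B → ℝ) (f : ℝ → ℝ) (l : ℝ)
    (h₁pos : ∀ x y, 0 < J₁ x y) (h₁sum : ∑ x, ∑ y, J₁ x y = 1)
    (h₂pos : ∀ x y, 0 < J₂ x y) (h₂sum : ∑ x, ∑ y, J₂ x y = 1)
    (hmarg : ∀ y, ∑ x, J₁ x y = ∑ x, J₂ x y)
    (hl0 : 0 ≤ l) (hl1 : l ≤ 1)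
    (hf : ConvexOn ℝ Set.univ f) (hf1 : f 1 = 0) :
    MIf f (fun x y => l * J₁ x y + (1 - l) * J₂ x y)
      ≤ l * MIf f J₁ + (1 - l) * MIf f J₂ := by
  simp only [MIf, mul_sum, ← sum_add_distrib]
  refine sum_le_sum fun x _ => sum_le_sum fun y _ => ?_
  -- The equality of the `Y`-marginals makes the product of marginals affine in the mixture.
  have hprod : (∑ y', (l * J₁ x y' + (1 - l) * J₂ x y'))
        * (∑ x', (l * J₁ x' y + (1 - l) * J₂ x' y))
      = l * ((∑ y', J₁ x y') * ∑ x', J₁ x' y)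
        + (1 - l) * ((∑ y', J₂ x y') * ∑ x', J₂ x' y) := by
    simp only [sum_add_distrib, ← mul_sum, hmarg y]
    ring
  have := perspective_convex hf ((∑ y', J₁ x y') * ∑ x', J₁ x' y)
    ((∑ y', J₂ x y') * ∑ x', J₂ x' y) hl0 (sub_nonneg.2 hl1) (by ring) (h₁pos x y) (h₂pos x y)
  rw [← hprod] at this
  simpa only [mul_sum] using this
end
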